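/- Let $*_\mu$ ($\mu \ge 3$) denote the Kingman–Bessel convolution and $\bullet$ the convolution with $(\delta_r \bullet \delta_s)(f) = f(\sqrt{r^2+s^2})$ on probability measures on $[0,\infty)$. Let $\nu$ be a probability measure on $[0,\infty)$ with $m_2(\nu) < \infty$. Then there is a constant $C = C(\nu)$ such that for all root-Lipschitz functions $f$ with constant $L$ and all $n \ge 2$, $\mu \ge 3$: $|\nu^{(n,*_\mu)}(f) - \nu^{(n,\bullet)}(f)| \le C L\, n^{3/2}/\sqrt{\mu}$. -/

import Mathlib

open MeasureTheory Filter ProbabilityTheory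

/-- The Kingman–Bessel normalization constant `κ_μ = ∫_{-1}^1 (1-v²)^{μ-3/2} dv`. -/
noncomputable def kappa (μ : ℝ) : ℝ := ∫ v in Set.Icc (-1 : ℝ) 1, (1 - v ^ 2) ^ (μ - 3 / 2)

/-- The Kingman–Bessel convolution of two point measures `δ_r *_μ δ_s`:
`(δ_r *_μ δ_s)(f) = κ_μ⁻¹ ∫_{-1}^1 f(√(r²+s²+2rsv)) (1-v²)^{μ-3/2} dv`. -/
noncomputable def kingmanKernel (μ r s : ℝ) : Measure ℝ :=
  (ENNReal.ofReal (kappa μ))⁻¹ •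
    Measure.map (fun v => Real.sqrt (r ^ 2 + s ^ 2 + 2 * r * s * v))
      ((volume.restrict (Set.Icc (-1 : ℝ) 1)).withDensity
        fun v => ENNReal.ofReal ((1 - v ^ 2) ^ (μ - 3 / 2)))

/-- The Kingman–Bessel convolution of two measures on `[0,∞)`. -/
noncomputable def kingmanConv (μ : ℝ) (ν₁ ν₂ : Measure ℝ) : Measure ℝ :=
  ν₁.bind fun r => ν₂.bind fun s => kingmanKernel μ r s

/-- The degenerate convolution `•` with `(δ_r • δ_s)(f) = f(√(r²+s²))`. -/
noncomputable def bulletConv (ν₁ ν₂ : Measure ℝ) : Measure ℝ :=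
  Measure.map (fun p : ℝ × ℝ => Real.sqrt (p.1 ^ 2 + p.2 ^ 2)) (ν₁.prod ν₂)

/-- `n`-fold Kingman–Bessel convolution power `ν^{(n,*_μ)}`. -/
noncomputable def kingmanPow (μ : ℝ) (ν : Measure ℝ) : ℕ → Measure ℝ
  | 0 => Measure.dirac 0
  | n + 1 => kingmanConv μ ν (kingmanPow μ ν n)

/-- `n`-fold `•`-convolution power `ν^{(n,•)}`. -/
noncomputable def bulletPow (ν : Measure ℝ) : ℕ → Measure ℝ
  | 0 => Measure.dirac 0
  | n + 1 => bulletConv ν (bulletPow ν n)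

noncomputable def kW (μ : ℝ) : Measure ℝ :=
  (ENNReal.ofReal (kappa μ))⁻¹ •
      ((volume.restrict (Set.Icc (-1 : ℝ) 1)).withDensity
        fun v => ENNReal.ofReal ((1 - v ^ 2) ^ (μ - 3 / 2)))

lemma w_cont (p : ℝ) (hp : 0 ≤ p) : Continuous (fun v : ℝ => (1 - v ^ 2) ^ p) :=
  Continuous.rpow_const (by fun_prop) (fun _ => Or.inr hp)

lemma kappa_eq (μ : ℝ) : kappa μ = ∫ v in (-1 : ℝ)..1, (1 - v ^ 2) ^ (μ - 3 / 2) := by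
  rw [intervalIntegral.integral_of_le (by norm_num), kappa, integral_Icc_eq_integral_Ioc]

lemma kappa_pos (μ : ℝ) (hμ : 3 ≤ μ) : 0 < kappa μ := by
  rw [kappa_eq]
  apply intervalIntegral.intervalIntegral_pos_of_pos_on
  · exact (w_cont _ (by linarith)).intervalIntegrable _ _
  · intro x hx
    apply Real.rpow_pos_of_pos
    nlinarith [hx.1, hx.2]
  · norm_num

lemma kW_integral (μ : ℝ) (hμ : 3 ≤ μ) (g : ℝ → ℝ) :
    ∫ v, g v ∂(kW μ) = (kappa μ)⁻¹ * ∫ v in (-1 : ℝ)..1, (1 - v ^ 2) ^ (μ - 3 / 2) * g v := by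
  have hm : Measurable (fun v : ℝ => ENNReal.ofReal ((1 - v ^ 2) ^ (μ - 3 / 2))) :=
    ((w_cont _ (by linarith)).measurable).ennreal_ofReal
  rw [kW, integral_smul_measure, integral_withDensity_eq_integral_toReal_smul hm (by simp),
    intervalIntegral.integral_of_le (by norm_num), integral_Icc_eq_integral_Ioc,
    ENNReal.toReal_inv, ENNReal.toReal_ofReal (kappa_pos μ hμ).le, smul_eq_mul]
  congr 1
  apply setIntegral_congr_fun measurableSet_Ioc
  intro v hv
  simp only [smul_eq_mul]
  rw [ENNReal.toReal_ofReal]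
  apply Real.rpow_nonneg
  nlinarith [hv.1, hv.2]

lemma kW_prob (μ : ℝ) (hμ : 3 ≤ μ) : IsProbabilityMeasure (kW μ) := by
  constructor
  have h0 := kappa_pos μ hμ
  rw [kW, Measure.smul_apply, withDensity_apply _ MeasurableSet.univ, Measure.restrict_univ,
    ← ofReal_integral_eq_lintegral_ofReal, ← kappa, smul_eq_mul, ENNReal.inv_mul_cancel]
  · simpa using h0
  · simp
  · exact ((w_cont _ (by linarith)).continuousOn).integrableOn_Icc
  · filter_upwards [ae_restrict_mem measurableSet_Icc] with v hv
    apply Real.rpow_nonneg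
    nlinarith [hv.1, hv.2]

lemma kW_ae (μ : ℝ) : ∀ᵐ v ∂(kW μ), |v| ≤ 1 := by
  apply Measure.ae_smul_measure
  apply (withDensity_absolutelyContinuous _ _).ae_le
  filter_upwards [ae_restrict_mem measurableSet_Icc] with v hv
  exact abs_le.2 hv

lemma kW_int (μ : ℝ) (hμ : 3 ≤ μ) (g : ℝ → ℝ) (hg : Measurable g)
    (hb : ∀ v, |v| ≤ 1 → |g v| ≤ 1) : Integrable g (kW μ) := by
  have := kW_prob μ hμ
  apply Integrable.of_bound hg.aestronglyMeasurable 1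
  filter_upwards [kW_ae μ] with v hv
  exact hb v hv

lemma kW_mean (μ : ℝ) (hμ : 3 ≤ μ) : ∫ v, v ∂(kW μ) = 0 := by
  rw [kW_integral μ hμ]
  have h := intervalIntegral.integral_comp_neg (a := -1) (b := 1)
    (fun v : ℝ => (1 - v ^ 2) ^ (μ - 3 / 2) * v)
  simp only [neg_neg, neg_sq, mul_neg, intervalIntegral.integral_neg] at h
  have : ∫ v in (-1 : ℝ)..1, (1 - v ^ 2) ^ (μ - 3 / 2) * v = 0 := by linarith
  rw [this, mul_zero]

lemma kW_sq (μ : ℝ) (hμ : 3 ≤ μ) : ∫ v, v ^ 2 ∂(kW μ) ≤ 1 / μ := by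
  rw [kW_integral μ hμ, inv_mul_le_iff₀ (kappa_pos μ hμ)]
  set p := μ - 3 / 2 with hp
  have hp0 : 0 < p := by linarith
  have hc := w_cont p hp0.le
  have i1 : IntervalIntegrable (fun v : ℝ => (1 - v ^ 2) ^ p) volume (-1) 1 :=
    hc.intervalIntegrable _ _
  have i2 : IntervalIntegrable (fun v : ℝ => (1 - v ^ 2) ^ p * v ^ 2) volume (-1) 1 :=
    (hc.mul (continuous_pow 2)).intervalIntegrable _ _
  have key : ∫ v in (-1 : ℝ)..1, ((1 - v ^ 2) ^ p - (2 * μ) * ((1 - v ^ 2) ^ p * v ^ 2)) =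
      (fun v : ℝ => v * (1 - v ^ 2) ^ (p + 1)) 1 - (fun v : ℝ => v * (1 - v ^ 2) ^ (p + 1)) (-1) := by
    refine intervalIntegral.integral_eq_sub_of_hasDerivAt_of_le (f := fun v : ℝ => v * (1 - v ^ 2) ^ (p + 1))
      (by norm_num) ?_ ?_ ?_
    · exact (continuous_id.mul (w_cont (p + 1) (by linarith))).continuousOn
    · intro x hx
      have hx1 : 0 < 1 - x ^ 2 := by nlinarith [hx.1, hx.2]
      have h1 : HasDerivAt (fun v : ℝ => 1 - v ^ 2) (-(2 * x)) x := by
        simpa using (hasDerivAt_pow 2 x).const_sub 1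
      have h2 := (hasDerivAt_id x).mul (h1.rpow_const (p := p + 1) (Or.inl hx1.ne'))
      refine HasDerivAt.congr_deriv (f := fun v : ℝ => v * (1 - v ^ 2) ^ (p + 1)) h2 ?_
      rw [add_sub_cancel_right]
      simp only [id_eq]
      rw [Real.rpow_add_one hx1.ne', hp]
      ring
    · exact i1.sub (i2.const_mul _)
  rw [intervalIntegral.integral_sub i1 (i2.const_mul _), intervalIntegral.integral_const_mul,
    hp, ← kappa_eq, ← hp] at key
  have : (0:ℝ) ^ (p + 1) = 0 := Real.zero_rpow (by linarith)
  simp [this] at key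
  have h0 := kappa_pos μ hμ
  rw [mul_one_div, le_div_iff₀ (by linarith)]
  nlinarith

lemma kW_abs (μ : ℝ) (hμ : 3 ≤ μ) : ∫ v, |v| ∂(kW μ) ≤ 1 / √μ := by
  have := kW_prob μ hμ
  have hs : 0 < √μ := Real.sqrt_pos.2 (by linarith)
  have hss : √μ * √μ = μ := Real.mul_self_sqrt (by linarith)
  have i2 : Integrable (fun v : ℝ => v ^ 2) (kW μ) := kW_int μ hμ _ (by fun_prop) (by
    intro v hv; rw [abs_pow]; exact pow_le_one₀ (abs_nonneg _) hv)
  have i1 : Integrable (fun v : ℝ => |v|) (kW μ) := kW_int μ hμ _ (by fun_prop) (by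
    intro v hv; simpa using hv)
  calc ∫ v, |v| ∂(kW μ) ≤ ∫ v, (√μ / 2 * v ^ 2 + 1 / (2 * √μ)) ∂(kW μ) := by
        apply integral_mono i1 ((i2.const_mul _).add (integrable_const _))
        intro v
        have : 0 ≤ (√μ * |v| - 1) ^ 2 / (2 * √μ) := by positivity
        have e : (√μ * |v| - 1) ^ 2 / (2 * √μ) = √μ / 2 * v ^ 2 + 1 / (2 * √μ) - |v| := by
          rw [← sq_abs v]; field_simp; ring
        simp only [Pi.add_apply]
        linarith
    _ = √μ / 2 * (∫ v, v ^ 2 ∂(kW μ)) + 1 / (2 * √μ) := by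
        rw [integral_add (i2.const_mul _) (integrable_const _), integral_const_mul]; simp
    _ ≤ √μ / 2 * (1 / μ) + 1 / (2 * √μ) := by
        gcongr; exact kW_sq μ hμ
    _ = 1 / √μ := by
        nth_rw 2 [← hss]; field_simp; norm_num

lemma phi_meas : Measurable (fun p : ℝ × ℝ × ℝ =>
    √(p.1 ^ 2 + p.2.1 ^ 2 + 2 * p.1 * p.2.1 * p.2.2)) := by fun_prop

lemma kingmanKernel_eq (μ r s : ℝ) : kingmanKernel μ r s =
    (kW μ).map (fun v => √(r ^ 2 + s ^ 2 + 2 * r * s * v)) := by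
  rw [kingmanKernel, kW, Measure.map_smul]

lemma kingmanConv_eq (μ : ℝ) (hμ : 3 ≤ μ) (ν ρ : Measure ℝ) [IsProbabilityMeasure ν]
    [IsProbabilityMeasure ρ] :
    kingmanConv μ ν ρ = (ν.prod (ρ.prod (kW μ))).map (fun p : ℝ × ℝ × ℝ =>
      √(p.1 ^ 2 + p.2.1 ^ 2 + 2 * p.1 * p.2.1 * p.2.2)) := by
  have := kW_prob μ hμ
  have e1 : ∀ r : ℝ, ∀ S, MeasurableSet S → (ρ.bind fun s => kingmanKernel μ r s) S =
      (ρ.prod (kW μ)) (Prod.mk r ⁻¹' ((fun p : ℝ × ℝ × ℝ =>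
      √(p.1 ^ 2 + p.2.1 ^ 2 + 2 * p.1 * p.2.1 * p.2.2)) ⁻¹' S)) := by
    intro r S hS
    have hT := phi_meas hS
    rw [Measure.bind_apply hS, Measure.prod_apply (measurable_prodMk_left hT)]
    · apply lintegral_congr
      intro s
      rw [kingmanKernel_eq, Measure.map_apply (by fun_prop) hS]
      rfl
    · apply Measurable.aemeasurable
      apply Measure.measurable_of_measurable_coe
      intro S hS
      have := measurable_measure_prodMk_left (ν := kW μ)
        (measurable_prodMk_left (x := r) (phi_meas hS))
      convert this using 2 with s
      rw [kingmanKernel_eq, Measure.map_apply (by fun_prop) hS]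
      rfl
  ext S hS
  rw [Measure.map_apply phi_meas hS, Measure.prod_apply (phi_meas hS), kingmanConv,
    Measure.bind_apply hS]
  · exact lintegral_congr fun r => e1 r S hS
  · apply Measurable.aemeasurable
    apply Measure.measurable_of_measurable_coe
    intro S hS
    have := measurable_measure_prodMk_left (ν := ρ.prod (kW μ)) (phi_meas hS)
    convert this using 2 with r
    exact e1 r S hS

lemma arg_nonneg (r s v : ℝ) (hv : |v| ≤ 1) : 0 ≤ r ^ 2 + s ^ 2 + 2 * r * s * v := by
  obtain ⟨h1, h2⟩ := abs_le.1 hv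
  nlinarith [sq_nonneg (r + s), sq_nonneg (r - s), sq_nonneg (r + s * v), sq_nonneg s,
    mul_nonneg (sq_nonneg s) (mul_nonneg (by linarith : 0 ≤ 1 - v) (by linarith : 0 ≤ 1 + v))]

lemma int_sqs (ν ρ : Measure ℝ) [IsProbabilityMeasure ν] [IsProbabilityMeasure ρ]
    (h1 : Integrable (fun x => x ^ 2) ν) (h2 : Integrable (fun x => x ^ 2) ρ) :
    Integrable (fun p : ℝ × ℝ => p.1 ^ 2 + p.2 ^ 2) (ν.prod ρ) :=
  (h1.comp_fst ρ).add (h2.comp_snd ν)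

lemma int_id (ν : Measure ℝ) [IsProbabilityMeasure ν]
    (h1 : Integrable (fun x => x ^ 2) ν) : Integrable (fun x : ℝ => x) ν := by
  refine ((integrable_const (1:ℝ)).add h1).mono' (by fun_prop) (ae_of_all _ fun x => ?_)
  simp only [Pi.add_apply, Real.norm_eq_abs]
  nlinarith [sq_nonneg (|x| - 1), sq_abs x, abs_nonneg x]

lemma growth (f : ℝ → ℝ) (L : ℝ) (hf : ∀ x y : ℝ, 0 ≤ x → 0 ≤ y →
        |f (Real.sqrt x) - f (Real.sqrt y)| ≤ L * |x - y|) (x : ℝ) (hx : 0 ≤ x) :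
    |f (√x)| ≤ |f 0| + L * x := by
  have := hf x 0 hx le_rfl
  rw [Real.sqrt_zero, sub_zero, abs_of_nonneg hx] at this
  have := abs_sub_abs_le_abs_sub (f (√x)) (f 0)
  linarith

lemma L_nonneg (f : ℝ → ℝ) (L : ℝ) (hf : ∀ x y : ℝ, 0 ≤ x → 0 ≤ y →
        |f (Real.sqrt x) - f (Real.sqrt y)| ≤ L * |x - y|) : 0 ≤ L := by
  have := (abs_nonneg _).trans (hf 1 0 (by norm_num) le_rfl)
  simpa using this

lemma prod_rsv (μ : ℝ) (hμ : 3 ≤ μ) (ν ρ : Measure ℝ) [IsProbabilityMeasure ν]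
    [IsProbabilityMeasure ρ]
    (h1 : Integrable (fun x => x ^ 2) ν) (h2 : Integrable (fun x => x ^ 2) ρ) :
    Integrable (fun p : ℝ × ℝ × ℝ => p.1 ^ 2 + p.2.1 ^ 2) (ν.prod (ρ.prod (kW μ))) ∧
    Integrable (fun p : ℝ × ℝ × ℝ => p.1 * (p.2.1 * p.2.2)) (ν.prod (ρ.prod (kW μ))) := by
  have := kW_prob μ hμ
  have iv : Integrable (fun v : ℝ => v) (kW μ) := kW_int μ hμ _ (by fun_prop) (fun v hv => hv)
  constructor
  · exact (h1.comp_fst (ρ.prod (kW μ))).add ((h2.comp_fst (kW μ)).comp_snd ν)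
  · exact (int_id ν h1).mul_prod ((int_id ρ h2).mul_prod iv)

lemma ae3 (μ : ℝ) (hμ : 3 ≤ μ) (ν ρ : Measure ℝ) [IsProbabilityMeasure ν]
    [IsProbabilityMeasure ρ] : ∀ᵐ p ∂(ν.prod (ρ.prod (kW μ))), |p.2.2| ≤ 1 := by
  have := kW_prob μ hμ
  have h : Measure.QuasiMeasurePreserving (fun p : ℝ × ℝ × ℝ => p.2.2)
      (ν.prod (ρ.prod (kW μ))) (kW μ) :=
    Measure.quasiMeasurePreserving_snd.comp Measure.quasiMeasurePreserving_snd
  exact h.ae (kW_ae μ)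

lemma kingmanConv_props (μ : ℝ) (hμ : 3 ≤ μ) (ν ρ : Measure ℝ) [IsProbabilityMeasure ν]
    [IsProbabilityMeasure ρ]
    (h1 : Integrable (fun x => x ^ 2) ν) (h2 : Integrable (fun x => x ^ 2) ρ) :
    IsProbabilityMeasure (kingmanConv μ ν ρ) ∧ Integrable (fun x => x ^ 2) (kingmanConv μ ν ρ) ∧
    ∫ x, x ^ 2 ∂(kingmanConv μ ν ρ) = ∫ x, x ^ 2 ∂ν + ∫ x, x ^ 2 ∂ρ := by
  have := kW_prob μ hμ
  obtain ⟨ia, ib⟩ := prod_rsv μ hμ ν ρ h1 h2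
  rw [kingmanConv_eq μ hμ]
  have hae : (fun p : ℝ × ℝ × ℝ => √(p.1 ^ 2 + p.2.1 ^ 2 + 2 * p.1 * p.2.1 * p.2.2) ^ 2)
      =ᵐ[ν.prod (ρ.prod (kW μ))]
      (fun p : ℝ × ℝ × ℝ => (p.1 ^ 2 + p.2.1 ^ 2) + 2 * (p.1 * (p.2.1 * p.2.2))) := by
    filter_upwards [ae3 μ hμ ν ρ] with p hp
    rw [Real.sq_sqrt (arg_nonneg _ _ _ hp)]; ring
  refine ⟨Measure.isProbabilityMeasure_map phi_meas.aemeasurable, ?_, ?_⟩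
  · rw [integrable_map_measure (by fun_prop) phi_meas.aemeasurable]
    exact (ia.add (ib.const_mul 2)).congr hae.symm
  · rw [integral_map phi_meas.aemeasurable (by fun_prop), integral_congr_ae hae,
      integral_add ia (ib.const_mul 2), integral_const_mul,
      integral_prod_mul (fun r : ℝ => r) (fun q : ℝ × ℝ => q.1 * q.2),
      integral_prod_mul (fun r : ℝ => r) (fun r : ℝ => r), kW_mean μ hμ,
      integral_add (h1.comp_fst (ρ.prod (kW μ))) ((h2.comp_fst (kW μ)).comp_snd ν)]
    have e1 := integral_fun_fst (μ := ν) (ν := ρ.prod (kW μ)) (fun x : ℝ => x ^ 2)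
    have e2 := integral_fun_snd (μ := ν) (ν := ρ.prod (kW μ)) (fun x : ℝ × ℝ => x.1 ^ 2)
    have e3 := integral_fun_fst (μ := ρ) (ν := kW μ) (fun x : ℝ => x ^ 2)
    simp at e1 e2 e3
    rw [e1, e2, e3]; ring

lemma psi_meas : Measurable (fun p : ℝ × ℝ => √(p.1 ^ 2 + p.2 ^ 2)) := by fun_prop

lemma bulletConv_props (ν ρ : Measure ℝ) [IsProbabilityMeasure ν]
    [IsProbabilityMeasure ρ]
    (h1 : Integrable (fun x => x ^ 2) ν) (h2 : Integrable (fun x => x ^ 2) ρ) :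
    IsProbabilityMeasure (bulletConv ν ρ) ∧ Integrable (fun x => x ^ 2) (bulletConv ν ρ) := by
  rw [bulletConv]
  refine ⟨Measure.isProbabilityMeasure_map psi_meas.aemeasurable, ?_⟩
  rw [integrable_map_measure (by fun_prop) psi_meas.aemeasurable]
  refine (int_sqs ν ρ h1 h2).congr (ae_of_all _ fun p => ?_)
  simp only [Function.comp]
  rw [Real.sq_sqrt (by positivity)]

lemma int_f2 (ν ρ : Measure ℝ) [IsProbabilityMeasure ν]
    [IsProbabilityMeasure ρ]
    (h1 : Integrable (fun x => x ^ 2) ν) (h2 : Integrable (fun x => x ^ 2) ρ)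
    (f : ℝ → ℝ) (L : ℝ) (hm : Measurable f) (hf : ∀ x y : ℝ, 0 ≤ x → 0 ≤ y →
        |f (Real.sqrt x) - f (Real.sqrt y)| ≤ L * |x - y|) :
    Integrable (fun p : ℝ × ℝ => f (√(p.1 ^ 2 + p.2 ^ 2))) (ν.prod ρ) := by
  refine ((integrable_const |f 0|).add ((int_sqs ν ρ h1 h2).const_mul L)).mono'
    (hm.comp psi_meas).aestronglyMeasurable (ae_of_all _ fun p => ?_)
  exact growth f L hf _ (by positivity)

lemma stepB (μ : ℝ) (hμ : 3 ≤ μ) (ν ρ : Measure ℝ) [IsProbabilityMeasure ν]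
    [IsProbabilityMeasure ρ]
    (h1 : Integrable (fun x => x ^ 2) ν) (h2 : Integrable (fun x => x ^ 2) ρ)
    (f : ℝ → ℝ) (L : ℝ) (hm : Measurable f) (hf : ∀ x y : ℝ, 0 ≤ x → 0 ≤ y →
        |f (Real.sqrt x) - f (Real.sqrt y)| ≤ L * |x - y|) (a : ℝ) (ha : 0 < a) :
    |∫ x, f x ∂(kingmanConv μ ν ρ) - ∫ x, f x ∂(bulletConv ν ρ)| ≤
      L * ((a * ∫ x, x ^ 2 ∂ν) + a⁻¹ * ∫ x, x ^ 2 ∂ρ) / √μ := by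
  have := kW_prob μ hμ
  have hL := L_nonneg f L hf
  have iv : Integrable (fun v : ℝ => |v|) (kW μ) :=
    kW_int μ hμ _ (by fun_prop) (fun v hv => by simpa using hv)
  obtain ⟨ia, ib⟩ := prod_rsv μ hμ ν ρ h1 h2
  have i1 : Integrable (fun p : ℝ × ℝ × ℝ =>
      f (√(p.1 ^ 2 + p.2.1 ^ 2 + 2 * p.1 * p.2.1 * p.2.2))) (ν.prod (ρ.prod (kW μ))) := by
    refine ((integrable_const |f 0|).add ((ia.add (ib.const_mul 2)).const_mul L)).mono'
      (hm.comp phi_meas).aestronglyMeasurable ?_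
    filter_upwards [ae3 μ hμ ν ρ] with p hp
    refine (growth f L hf _ (arg_nonneg _ _ _ hp)).trans (le_of_eq ?_)
    simp only [Pi.add_apply]; ring
  have i2 : Integrable (fun p : ℝ × ℝ × ℝ =>
      f (√(p.1 ^ 2 + p.2.1 ^ 2))) (ν.prod (ρ.prod (kW μ))) := by
    refine ((integrable_const |f 0|).add (ia.const_mul L)).mono'
      (hm.comp (by fun_prop)).aestronglyMeasurable (ae_of_all _ fun p => ?_)
    exact growth f L hf _ (by positivity)
  have eB : ∫ x, f x ∂(bulletConv ν ρ) =
      ∫ p : ℝ × ℝ × ℝ, f (√(p.1 ^ 2 + p.2.1 ^ 2)) ∂(ν.prod (ρ.prod (kW μ))) := by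
    have hmp : MeasurePreserving (Prod.map id Prod.fst : ℝ × ℝ × ℝ → ℝ × ℝ)
        (ν.prod (ρ.prod (kW μ))) (ν.prod ρ) :=
      (MeasurePreserving.id ν).prod measurePreserving_fst
    rw [bulletConv, integral_map psi_meas.aemeasurable hm.aestronglyMeasurable, ← hmp.map_eq,
      integral_map hmp.measurable.aemeasurable
        (f := fun p : ℝ × ℝ => f (√(p.1 ^ 2 + p.2 ^ 2))) (hm.comp psi_meas).aestronglyMeasurable]
    rfl
  have j1 := h1.mul_prod (iv.comp_snd ρ)
  have j2 := (integrable_const (1:ℝ) (μ := ν)).mul_prod (h2.mul_prod iv)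
  rw [kingmanConv_eq μ hμ, integral_map phi_meas.aemeasurable hm.aestronglyMeasurable, eB,
    ← integral_sub i1 i2]
  calc _ ≤ ∫ p : ℝ × ℝ × ℝ, L * (a * (p.1 ^ 2 * |p.2.2|) + a⁻¹ * (1 * (p.2.1 ^ 2 * |p.2.2|)))
        ∂(ν.prod (ρ.prod (kW μ))) := by
        rw [← Real.norm_eq_abs]
        refine norm_integral_le_of_norm_le (((j1.const_mul a).add (j2.const_mul a⁻¹)).const_mul L) ?_
        filter_upwards [ae3 μ hμ ν ρ] with p hp
        refine (hf _ _ (arg_nonneg _ _ _ hp) (by positivity)).trans ?_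
        apply mul_le_mul_of_nonneg_left _ hL
        rw [add_sub_cancel_left, abs_mul, abs_mul, abs_mul, abs_two]
        have : 0 ≤ a⁻¹ * (a * |p.1| - |p.2.1|) ^ 2 * |p.2.2| := by positivity
        have e : a⁻¹ * (a * |p.1| - |p.2.1|) ^ 2 * |p.2.2| =
          a * (p.1 ^ 2 * |p.2.2|) + a⁻¹ * (1 * (p.2.1 ^ 2 * |p.2.2|)) -
            2 * |p.1| * |p.2.1| * |p.2.2| := by
          rw [← sq_abs p.1, ← sq_abs p.2.1]; field_simp; ring
        linarith
    _ = L * ((a * ∫ x, x ^ 2 ∂ν) + a⁻¹ * ∫ x, x ^ 2 ∂ρ) * ∫ v, |v| ∂(kW μ) := by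
        rw [integral_const_mul, integral_add (j1.const_mul a) (j2.const_mul a⁻¹),
          integral_const_mul, integral_const_mul,
          integral_prod_mul (fun r : ℝ => r ^ 2) (fun q : ℝ × ℝ => |q.2|),
          integral_prod_mul (fun r : ℝ => (1 : ℝ)) (fun q : ℝ × ℝ => q.1 ^ 2 * |q.2|),
          integral_prod_mul (fun r : ℝ => r ^ 2) (fun v : ℝ => |v|)]
        have e2 := integral_fun_snd (μ := ρ) (ν := kW μ) (fun x : ℝ => |x|)
        simp at e2
        rw [e2]; simp; ring
    _ ≤ L * ((a * ∫ x, x ^ 2 ∂ν) + a⁻¹ * ∫ x, x ^ 2 ∂ρ) * (1 / √μ) := by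
        apply mul_le_mul_of_nonneg_left (kW_abs μ hμ)
        have := integral_nonneg (μ := ν) (f := fun x : ℝ => x ^ 2) (fun x => sq_nonneg x)
        have := integral_nonneg (μ := ρ) (f := fun x : ℝ => x ^ 2) (fun x => sq_nonneg x)
        positivity
    _ = _ := by ring

lemma stepC (ν ρ σ : Measure ℝ) [IsProbabilityMeasure ν]
    [IsProbabilityMeasure ρ] [IsProbabilityMeasure σ]
    (h1 : Integrable (fun x => x ^ 2) ν) (h2 : Integrable (fun x => x ^ 2) ρ)
    (h3 : Integrable (fun x => x ^ 2) σ) (E L : ℝ)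
    (H : ∀ f : ℝ → ℝ, Measurable f → (∀ x y : ℝ, 0 ≤ x → 0 ≤ y →
        |f (Real.sqrt x) - f (Real.sqrt y)| ≤ L * |x - y|) →
        |∫ x, f x ∂ρ - ∫ x, f x ∂σ| ≤ E)
    (f : ℝ → ℝ) (hm : Measurable f) (hf : ∀ x y : ℝ, 0 ≤ x → 0 ≤ y →
        |f (Real.sqrt x) - f (Real.sqrt y)| ≤ L * |x - y|) :
    |∫ x, f x ∂(bulletConv ν ρ) - ∫ x, f x ∂(bulletConv ν σ)| ≤ E := by
  have a1 := int_f2 ν ρ h1 h2 f L hm hf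
  have a2 := int_f2 ν σ h1 h3 f L hm hf
  rw [bulletConv, bulletConv, integral_map psi_meas.aemeasurable hm.aestronglyMeasurable,
    integral_map psi_meas.aemeasurable hm.aestronglyMeasurable, integral_prod _ a1,
    integral_prod _ a2, ← integral_sub a1.integral_prod_left a2.integral_prod_left]
  have : ‖∫ r, (∫ s, f (√(r ^ 2 + s ^ 2)) ∂ρ - ∫ s, f (√(r ^ 2 + s ^ 2)) ∂σ) ∂ν‖ ≤
      E * ν.real Set.univ := by
    apply norm_integral_le_of_norm_le_const
    refine ae_of_all _ fun r => H (fun s => f (√(r ^ 2 + s ^ 2))) (hm.comp (by fun_prop)) ?_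
    intro x y hx hy
    simp only [Real.sq_sqrt hx, Real.sq_sqrt hy]
    have := hf (r ^ 2 + x) (r ^ 2 + y) (by positivity) (by positivity)
    rwa [add_sub_add_left_eq_sub] at this
  simpa using this

lemma kingmanPow_props (μ : ℝ) (hμ : 3 ≤ μ) (ν : Measure ℝ) [IsProbabilityMeasure ν]
    (h1 : Integrable (fun x => x ^ 2) ν) (n : ℕ) :
    IsProbabilityMeasure (kingmanPow μ ν n) ∧ Integrable (fun x => x ^ 2) (kingmanPow μ ν n) ∧
    ∫ x, x ^ 2 ∂(kingmanPow μ ν n) = n * ∫ x, x ^ 2 ∂ν := by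
  induction n with
  | zero =>
    simp only [kingmanPow]
    refine ⟨inferInstance, integrable_dirac (by simp), by simp⟩
  | succ n ih =>
    obtain ⟨i1, i2, i3⟩ := ih
    obtain ⟨j1, j2, j3⟩ := kingmanConv_props μ hμ ν (kingmanPow μ ν n) h1 i2
    refine ⟨j1, j2, ?_⟩
    rw [kingmanPow, j3, i3]; push_cast; ring

lemma bulletPow_props (ν : Measure ℝ) [IsProbabilityMeasure ν]
    (h1 : Integrable (fun x => x ^ 2) ν) (n : ℕ) :
    IsProbabilityMeasure (bulletPow ν n) ∧ Integrable (fun x => x ^ 2) (bulletPow ν n) := by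
  induction n with
  | zero =>
    simp only [bulletPow]
    exact ⟨inferInstance, integrable_dirac (by simp)⟩
  | succ n ih =>
    obtain ⟨i1, i2⟩ := ih
    exact bulletConv_props ν (bulletPow ν n) h1 i2

lemma main_ind (μ : ℝ) (hμ : 3 ≤ μ) (ν : Measure ℝ) [IsProbabilityMeasure ν]
    (h1 : Integrable (fun x => x ^ 2) ν) (L : ℝ) (N : ℕ) (hN : 0 < N) (n : ℕ) (hn : n ≤ N) :
    ∀ f : ℝ → ℝ, Measurable f → (∀ x y : ℝ, 0 ≤ x → 0 ≤ y →
        |f (Real.sqrt x) - f (Real.sqrt y)| ≤ L * |x - y|) →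
        |∫ x, f x ∂(kingmanPow μ ν n) - ∫ x, f x ∂(bulletPow ν n)| ≤
          n * (L * (2 * √N * ∫ x, x ^ 2 ∂ν) / √μ) := by
  induction n with
  | zero => intro f _ _; simp [kingmanPow, bulletPow]
  | succ n ih =>
    intro f hm hf
    have hL := L_nonneg f L hf
    obtain ⟨i1, i2, i3⟩ := kingmanPow_props μ hμ ν h1 n
    obtain ⟨j1, j2⟩ := bulletPow_props ν h1 n
    have hs : 0 < √(N : ℝ) := Real.sqrt_pos.2 (by exact_mod_cast hN)
    have hss : √(N : ℝ) * √N = N := Real.mul_self_sqrt (by positivity)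
    have hm2 := integral_nonneg (μ := ν) (f := fun x : ℝ => x ^ 2) (fun x => sq_nonneg x)
    have b := stepB μ hμ ν (kingmanPow μ ν n) h1 i2 f L hm hf (√N) hs
    have c := stepC ν _ _ h1 i2 j2 _ L (ih (by omega)) f hm hf
    have d : L * (√N * (∫ x, x ^ 2 ∂ν) + (√N)⁻¹ * ∫ x, x ^ 2 ∂(kingmanPow μ ν n)) / √μ ≤
        L * (2 * √N * ∫ x, x ^ 2 ∂ν) / √μ := by
      rw [i3]
      gcongr
      have : (√(N : ℝ))⁻¹ * (n * ∫ x, x ^ 2 ∂ν) ≤ √N * ∫ x, x ^ 2 ∂ν := by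
        rw [← mul_assoc]
        apply mul_le_mul_of_nonneg_right _ hm2
        rw [inv_mul_le_iff₀ hs, hss]
        exact_mod_cast (by omega : n ≤ N)
      linarith
    simp only [kingmanPow, bulletPow]
    refine (abs_sub_le _ _ _).trans ((add_le_add (b.trans d) c).trans (le_of_eq ?_))
    push_cast; ring

/-- Comparison of `n`-fold convolution powers:
`|ν^{(n,*_μ)}(f) - ν^{(n,•)}(f)| ≤ C L n^{3/2}/√μ` for root-Lipschitz `f`. -/
theorem power_comparison (ν : Measure ℝ) [IsProbabilityMeasure ν]
    (hν : ν (Set.Iio 0) = 0) (hi : Integrable (fun x => x ^ 2) ν) :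
    ∃ C > (0 : ℝ), ∀ (f : ℝ → ℝ) (L : ℝ), Measurable f →
      (∀ x y : ℝ, 0 ≤ x → 0 ≤ y →
        |f (Real.sqrt x) - f (Real.sqrt y)| ≤ L * |x - y|) →
      ∀ n : ℕ, 2 ≤ n → ∀ μ : ℝ, μ ≥ 3 →
        |(∫ x, f x ∂(kingmanPow μ ν n)) - ∫ x, f x ∂(bulletPow ν n)|
          ≤ C * L * (n : ℝ) ^ ((3 : ℝ) / 2) / Real.sqrt μ := by
  refine ⟨2 * (∫ x, x ^ 2 ∂ν) + 1, ?_, ?_⟩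
  · have hm2 := integral_nonneg (μ := ν) (f := fun x : ℝ => x ^ 2) (fun x => sq_nonneg x)
    positivity
  intro f L hm hf n hn μ hμ
  have hL := L_nonneg f L hf
  refine (main_ind μ hμ ν hi L n (by omega) n le_rfl f hm hf).trans ?_
  have e : (n : ℝ) ^ ((3 : ℝ) / 2) = n * √n := by
    have h0 : (0 : ℝ) < n := by exact_mod_cast (by omega : 0 < n)
    rw [Real.sqrt_eq_rpow, show (3 : ℝ) / 2 = 1 + 1 / 2 by norm_num, Real.rpow_add h0,
      Real.rpow_one]
  rw [e, ← mul_div_assoc]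
  apply div_le_div_of_nonneg_right _ (Real.sqrt_nonneg _)
  have : 0 ≤ L * (n * √n) := by positivity
  nlinarith
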